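/- Let F be uniformly elliptic with constants λ, Λ and F(0) = 0, let u solve the parabolic double obstacle problem (φ₁, φ₂, F, Q₁), and let γ ∈ ℝ be a constant with φ₁(x) < γ < φ₂(x) for all x ∈ B̄₁. Then w := max(u, γ) is a viscosity subsolution of F(D²w) − ∂ₜw ≥ 0 on Q₁, and min(u, γ) is a viscosity supersolution of F(D²·) − ∂ₜ· ≤ 0 on Q₁. -/

import Mathlib

/-! For the maximum, let `w - ψ`, where `w = max u γ`, have a local maximum at `X₀`. If
`u X₀ ≥ γ`, then `φ₁ < u` at `X₀` and `w X₀ = u X₀`; since `u ≤ w`, also `u - ψ` has a local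
maximum there, and the subsolution property of `u` off the contact set of `φ₁` applies. If
`u X₀ < γ`, then `w X₀ = γ ≤ w`, so `ψ` itself has a local minimum at `X₀`: its time derivative
vanishes and its spatial Hessian `H` is positive semidefinite, so that
`F H ≥ F 0 + lam * ‖H‖ ≥ 0` by ellipticity. The statement for the minimum is symmetric: there `ψ`
has a local maximum, `-H` is positive semidefinite and `0 = F (H + -H) ≥ F H + lam * ‖-H‖`.

The analytic input is the second-order necessary condition at a local minimum,
`posSemidef_hessian_of_isLocalMin`, obtained by restriction to lines. -/

open Metric MeasureTheory Set

noncomputable section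

attribute [local instance] Matrix.frobeniusNormedAddCommGroup

abbrev Mat (n : ℕ) := Matrix (Fin n) (Fin n) ℝ
abbrev Euc (n : ℕ) := EuclideanSpace ℝ (Fin n)

def UniformlyElliptic {n : ℕ} (lam Lam : ℝ) (F : Mat n → ℝ) : Prop :=
  ∀ M N : Mat n, M.IsSymm → N.IsSymm → N.PosSemidef →
    lam * ‖N‖ ≤ F (M + N) - F M ∧ F (M + N) - F M ≤ Lam * ‖N‖

def Hessian {n : ℕ} (ψ : Euc n → ℝ) (x : Euc n) : Mat n :=
  Matrix.of fun i j =>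
    iteratedFDeriv ℝ 2 ψ x ![EuclideanSpace.single i 1, EuclideanSpace.single j 1]

/-- Spatial Hessian of a function on space-time. -/
def HessianX {n : ℕ} (ψ : Euc n × ℝ → ℝ) (X : Euc n × ℝ) : Mat n :=
  Hessian (fun y => ψ (y, X.2)) X.1

/-- Time derivative of a function on space-time. -/
def timeDeriv {n : ℕ} (ψ : Euc n × ℝ → ℝ) (X : Euc n × ℝ) : ℝ :=
  deriv (fun s => ψ (X.1, s)) X.2

/-- Parabolic cylinder `Q_r(x₀,t₀)`. -/
def parCyl {n : ℕ} (r : ℝ) (X₀ : Euc n × ℝ) : Set (Euc n × ℝ) :=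
  (ball X₀.1 r) ×ˢ (Ioo (X₀.2 - r ^ 2) (X₀.2 + r ^ 2))

/-- Lower parabolic cylinder `Q⁻_r = B_r × (−r², 0)`. -/
def parCylNeg (n : ℕ) (r : ℝ) : Set (Euc n × ℝ) :=
  (ball (0 : Euc n) r) ×ˢ (Ioo (-r ^ 2) 0)

/-- `u` is a viscosity supersolution of `F(D²u) − ∂ₜu ≤ 0` on `Ω`. -/
def PViscSupersolution {n : ℕ} (F : Mat n → ℝ) (u : Euc n × ℝ → ℝ)
    (Ω : Set (Euc n × ℝ)) : Prop :=
  ∀ X₀ ∈ Ω, ∀ ψ : Euc n × ℝ → ℝ, ContDiffAt ℝ 2 ψ X₀ →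
    IsLocalMinOn (fun X => u X - ψ X) Ω X₀ → F (HessianX ψ X₀) - timeDeriv ψ X₀ ≤ 0

/-- `u` is a viscosity subsolution of `F(D²u) − ∂ₜu ≥ 0` on `Ω`. -/
def PViscSubsolution {n : ℕ} (F : Mat n → ℝ) (u : Euc n × ℝ → ℝ)
    (Ω : Set (Euc n × ℝ)) : Prop :=
  ∀ X₀ ∈ Ω, ∀ ψ : Euc n × ℝ → ℝ, ContDiffAt ℝ 2 ψ X₀ →
    IsLocalMaxOn (fun X => u X - ψ X) Ω X₀ → 0 ≤ F (HessianX ψ X₀) - timeDeriv ψ X₀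

/-- `u` solves the parabolic double obstacle problem `(φ₁, φ₂, F, Q)` with
time-independent obstacles `φ₁, φ₂`. -/
def SolvesPDOP {n : ℕ} (F : Mat n → ℝ) (φ₁ φ₂ : Euc n → ℝ) (u : Euc n × ℝ → ℝ)
    (Q : Set (Euc n × ℝ)) : Prop :=
  ContinuousOn u (closure Q) ∧
  (∀ X ∈ closure Q, φ₁ X.1 ≤ u X ∧ u X ≤ φ₂ X.1) ∧
  PViscSupersolution F u ({X | u X < φ₂ X.1} ∩ Q) ∧
  PViscSubsolution F u ({X | φ₁ X.1 < u X} ∩ Q)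

open Filter Topology

/-- If the second derivative were negative, the point would also be a local maximum, so the
function would be locally constant. -/
lemma deriv_deriv_nonneg_of_isLocalMin {g : ℝ → ℝ} {a : ℝ} (h : IsLocalMin g a)
    (hc : ContinuousAt g a) : 0 ≤ deriv (deriv g) a := by
  by_contra! hneg
  have hmax := isLocalMax_of_deriv_deriv_neg hneg h.deriv_eq_zero hc
  have hconst : g =ᶠ[𝓝 a] fun _ => g a := by
    filter_upwards [h, hmax] with s h1 h2 using le_antisymm h2 h1
  have hzero : deriv (deriv g) a = 0 := by
    rw [hconst.deriv.deriv_eq]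
    simp
  exact hneg.ne hzero

lemma fderiv_fderiv_nonneg_of_isLocalMin {n : ℕ} {f : Euc n → ℝ} {x : Euc n}
    (hf : ContDiffAt ℝ 2 f x) (h : IsLocalMin f x) (v : Euc n) :
    0 ≤ fderiv ℝ (fderiv ℝ f) x v v := by
  have hline : ∀ s : ℝ, HasDerivAt (fun s : ℝ => x + s • v) v s := fun s => by
    simpa using ((hasDerivAt_id s).smul_const v).const_add x
  have htend : Tendsto (fun s : ℝ => x + s • v) (𝓝 0) (𝓝 x) := by
    simpa using (hline 0).continuousAt.tendsto
  have hdiff : ∀ᶠ y in 𝓝 x, DifferentiableAt ℝ f y :=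
    (hf.eventually (by simp)).mono fun y hy => hy.differentiableAt (by simp)
  have hfirst : deriv (fun s : ℝ => f (x + s • v)) =ᶠ[𝓝 0]
      fun s => fderiv ℝ f (x + s • v) v := by
    filter_upwards [htend.eventually hdiff] with s hs
    exact (hs.hasFDerivAt.comp_hasDerivAt s (hline s)).deriv
  have hsecond : deriv (deriv fun s : ℝ => f (x + s • v)) 0 = fderiv ℝ (fderiv ℝ f) x v v := by
    rw [hfirst.deriv_eq]
    have hd : DifferentiableAt ℝ (fderiv ℝ f) (x + (0 : ℝ) • v) := by
      simpa using (hf.fderiv_right (m := 1) (by norm_num)).differentiableAt (by simp)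
    have hcomp := hd.hasFDerivAt.comp_hasDerivAt (0 : ℝ) (hline 0)
    simpa using (hcomp.clm_apply (hasDerivAt_const (0 : ℝ) v)).deriv
  rw [← hsecond]
  refine deriv_deriv_nonneg_of_isLocalMin ?_ ?_
  · simpa [IsLocalMin, IsMinFilter] using htend.eventually h
  · exact ContinuousAt.comp (f := fun s : ℝ => x + s • v) (by simpa using hf.continuousAt)
      (hline 0).continuousAt

lemma hessian_apply {n : ℕ} (f : Euc n → ℝ) (x : Euc n) (i j : Fin n) :
    Hessian f x i j = fderiv ℝ (fderiv ℝ f) x (EuclideanSpace.single i 1)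
      (EuclideanSpace.single j 1) := by
  simp [Hessian, iteratedFDeriv_two_apply]

lemma isSymm_hessian {n : ℕ} {f : Euc n → ℝ} {x : Euc n} (hf : ContDiffAt ℝ 2 f x) :
    (Hessian f x).IsSymm := by
  ext i j
  rw [Matrix.transpose_apply, hessian_apply, hessian_apply]
  exact hf.isSymmSndFDerivAt (by simp) _ _

lemma dotProduct_hessian_mulVec {n : ℕ} (f : Euc n → ℝ) (x : Euc n) (v : Fin n → ℝ) :
    v ⬝ᵥ (Hessian f x).mulVec v =
      fderiv ℝ (fderiv ℝ f) x (WithLp.toLp 2 v) (WithLp.toLp 2 v) := by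
  have hv : WithLp.toLp 2 v = ∑ i, v i • (EuclideanSpace.single i 1 : Euc n) := by
    ext j
    simp [Finset.sum_apply, Pi.single_apply]
  rw [hv]
  simp only [dotProduct, Matrix.mulVec, hessian_apply, map_sum, map_smul,
    _root_.sum_apply, _root_.smul_apply, smul_eq_mul, Finset.mul_sum]
  rw [Finset.sum_comm]
  refine Finset.sum_congr rfl fun i _ => Finset.sum_congr rfl fun j _ => ?_
  ring

/-- Second-order necessary condition for a local minimum. -/
lemma posSemidef_hessian_of_isLocalMin {n : ℕ} {f : Euc n → ℝ} {x : Euc n}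
    (hf : ContDiffAt ℝ 2 f x) (h : IsLocalMin f x) : (Hessian f x).PosSemidef := by
  refine .of_dotProduct_mulVec_nonneg ?_ fun v => ?_
  · rw [Matrix.IsHermitian, Matrix.conjTranspose_eq_transpose_of_trivial]
    exact isSymm_hessian hf
  · rw [star_trivial, dotProduct_hessian_mulVec]
    exact fderiv_fderiv_nonneg_of_isLocalMin hf h _

lemma hessian_neg {n : ℕ} (f : Euc n → ℝ) (x : Euc n) :
    Hessian (fun y => -f y) x = -Hessian f x := by
  ext i j
  have hd : fderiv ℝ (fun y => -f y) = -fderiv ℝ f := funext fun y => fderiv_fun_neg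
  rw [Matrix.neg_apply, hessian_apply, hessian_apply, hd, fderiv_neg]
  simp

lemma contDiffAt_slice {n : ℕ} {ψ : Euc n × ℝ → ℝ} {X : Euc n × ℝ} (hψ : ContDiffAt ℝ 2 ψ X) :
    ContDiffAt ℝ 2 (fun y => ψ (y, X.2)) X.1 :=
  ContDiffAt.comp (f := fun y : Euc n => (y, X.2)) X.1 hψ (contDiffAt_id.prodMk contDiffAt_const)

lemma tendsto_slice_space {n : ℕ} (X : Euc n × ℝ) :
    Tendsto (fun y => (y, X.2)) (𝓝 X.1) (𝓝 X) :=
  (continuous_id.prodMk continuous_const).tendsto X.1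

lemma tendsto_slice_time {n : ℕ} (X : Euc n × ℝ) :
    Tendsto (fun s => (X.1, s)) (𝓝 X.2) (𝓝 X) :=
  (continuous_const.prodMk continuous_id).tendsto X.2

/-- A test function with an interior local minimum satisfies the subsolution inequality there. -/
lemma nonneg_of_isLocalMin {n : ℕ} {lam Lam : ℝ} (hlam : 0 < lam) {F : Mat n → ℝ}
    (hF : UniformlyElliptic lam Lam F) (hF0 : F 0 = 0) {ψ : Euc n × ℝ → ℝ} {X : Euc n × ℝ}
    (hψ : ContDiffAt ℝ 2 ψ X) (h : IsLocalMin ψ X) : 0 ≤ F (HessianX ψ X) - timeDeriv ψ X := by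
  have hpos : (HessianX ψ X).PosSemidef :=
    posSemidef_hessian_of_isLocalMin (contDiffAt_slice hψ) ((tendsto_slice_space X).eventually h)
  have htime : timeDeriv ψ X = 0 :=
    IsLocalMin.deriv_eq_zero ((tendsto_slice_time X).eventually h)
  have hell := (hF 0 (HessianX ψ X) Matrix.isSymm_zero
    (isSymm_hessian (contDiffAt_slice hψ)) hpos).1
  rw [zero_add, hF0] at hell
  have hnn := mul_nonneg hlam.le (norm_nonneg (HessianX ψ X))
  linarith

/-- A test function with an interior local maximum satisfies the supersolution inequality
there. -/
lemma nonpos_of_isLocalMax {n : ℕ} {lam Lam : ℝ} (hlam : 0 < lam) {F : Mat n → ℝ}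
    (hF : UniformlyElliptic lam Lam F) (hF0 : F 0 = 0) {ψ : Euc n × ℝ → ℝ} {X : Euc n × ℝ}
    (hψ : ContDiffAt ℝ 2 ψ X) (h : IsLocalMax ψ X) : F (HessianX ψ X) - timeDeriv ψ X ≤ 0 := by
  have hsymm : (HessianX ψ X).IsSymm := isSymm_hessian (contDiffAt_slice hψ)
  have hslice : IsLocalMax (fun y => ψ (y, X.2)) X.1 := (tendsto_slice_space X).eventually h
  have hpos : (-HessianX ψ X).PosSemidef := by
    rw [HessianX, ← hessian_neg]
    exact posSemidef_hessian_of_isLocalMin (contDiffAt_slice hψ).neg hslice.neg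
  have htime : timeDeriv ψ X = 0 :=
    IsLocalMax.deriv_eq_zero ((tendsto_slice_time X).eventually h)
  have hell := (hF (HessianX ψ X) (-HessianX ψ X) hsymm hsymm.neg hpos).1
  rw [add_neg_cancel, hF0] at hell
  have hnn := mul_nonneg hlam.le (norm_nonneg (-HessianX ψ X))
  linarith

lemma isOpen_parCyl {n : ℕ} (r : ℝ) (X : Euc n × ℝ) : IsOpen (parCyl r X) :=
  isOpen_ball.prod isOpen_Ioo

/-- Truncating a solution of the parabolic double obstacle problem at a constant level strictly
between the obstacles yields a global subsolution (for `max`) and supersolution (for `min`). -/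
theorem stmt_17 (n : ℕ) (hn : 1 ≤ n) (lam Lam : ℝ) (hlam : 0 < lam) (hlL : lam ≤ Lam)
    (F : Mat n → ℝ) (hF : UniformlyElliptic lam Lam F) (hF0 : F 0 = 0)
    (φ₁ φ₂ : Euc n → ℝ) (u : Euc n × ℝ → ℝ)
    (hu : SolvesPDOP F φ₁ φ₂ u (parCyl 1 ((0 : Euc n), (0 : ℝ))))
    (γ : ℝ) (hγ : ∀ x ∈ closedBall (0 : Euc n) 1, φ₁ x < γ ∧ γ < φ₂ x) :
    PViscSubsolution F (fun X => max (u X) γ) (parCyl 1 ((0 : Euc n), (0 : ℝ))) ∧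
    PViscSupersolution F (fun X => min (u X) γ) (parCyl 1 ((0 : Euc n), (0 : ℝ))) := by
  obtain ⟨-, -, hsup, hsub⟩ := hu
  have hγ' : ∀ X ∈ parCyl 1 ((0 : Euc n), (0 : ℝ)), φ₁ X.1 < γ ∧ γ < φ₂ X.1 :=
    fun X hX => hγ X.1 (ball_subset_closedBall hX.1)
  constructor
  · intro X₀ hX₀ ψ hψ hmax
    rcases le_or_gt γ (u X₀) with hle | hlt
    · refine hsub X₀ ⟨(hγ' X₀ hX₀).1.trans_le hle, hX₀⟩ ψ hψ ?_
      filter_upwards [hmax.on_subset inter_subset_right] with X hX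
      simp only [max_eq_left hle] at hX
      linarith [le_max_left (u X) γ]
    · refine nonneg_of_isLocalMin hlam hF hF0 hψ ?_
      filter_upwards [hmax.isLocalMax ((isOpen_parCyl _ _).mem_nhds hX₀)] with X hX
      simp only [max_eq_right hlt.le] at hX
      linarith [le_max_right (u X) γ]
  · intro X₀ hX₀ ψ hψ hmin
    rcases le_or_gt (u X₀) γ with hle | hlt
    · refine hsup X₀ ⟨hle.trans_lt (hγ' X₀ hX₀).2, hX₀⟩ ψ hψ ?_
      filter_upwards [hmin.on_subset inter_subset_right] with X hX
      simp only [min_eq_left hle] at hX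
      linarith [min_le_left (u X) γ]
    · refine nonpos_of_isLocalMax hlam hF hF0 hψ ?_
      filter_upwards [hmin.isLocalMin ((isOpen_parCyl _ _).mem_nhds hX₀)] with X hX
      simp only [min_eq_right hlt.le] at hX
      linarith [min_le_right (u X) γ]
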